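/- Let (V_k)_{k∈ℤ} be a centered jointly Gaussian sequence and let (d_k), (d'_k) be nonnegative weights with d_k = d'_k for all but finitely many k, such that S = ∑_k d_k² V_k² and S' = ∑_k d'_k² V_k² are finite a.s. If ln P(S ≤ ε²) ∼ −c ε^{−γ} as ε → 0⁺ for some c, γ > 0, then also ln P(S' ≤ ε²) ∼ −c ε^{−γ} as ε → 0⁺; that is, changing finitely many of the weights d_k does not affect the logarithmic small deviation asymptotics of the Gaussian quadratic form. -/

import Mathlib

/-!
Switching the finitely many differing weights one at a time, it suffices to treat weights `d`, `d'`
that differ at a single index `j`. Write `S`, `S'` for the two quadratic forms. The point is the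
correlation inequality
`P(S ≤ r) * P(|V j| ≤ a) ≤ P(S ≤ r, |V j| ≤ a)`,
which holds for an arbitrary joint Gaussian law (`tsum_corr`). With `r = (η ε)²` and `a` a small
multiple of `ε`, the event on the right forces `S' ≤ ε²`, while `P(|V j| ≤ a)` is at least linear
in `ε`; hence `κ ε P(S ≤ (η ε)²) ≤ P(S' ≤ ε²)` for small `ε` (`smallBall_le`), and likewise with
`S` and `S'` exchanged. After taking logarithms and dividing by `ε ^ (-γ)` the factor `κ ε` is
negligible, and `η → 1` gives the equivalence (`asymp_transfer`).

For the correlation inequality, continuity of measure along finite partial sums reduces to a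
Gaussian vector `X` and a Gaussian variable `ξ` (`gaussian_corr`). Regress `X` on `ξ` and rotate,
so that the residual has independent coordinates; the rotation preserves `∑ X_i²`. Conditionally
on `ξ = x`, the probability of `∑ X_i² ≤ r` is then the mass that a product of centred Gaussians
gives to a ball shifted by `x` times a fixed vector. It is even and nonincreasing in `|x|` by a
one-dimensional reflection argument applied in each coordinate (`pi_gaussian_shift`), and such
functions are positively correlated with `1_{|x| ≤ a}` (`lintegral_even_antitone`).
-/

open Filter Real Set MeasureTheory ProbabilityTheory
open scoped Topology ENNReal NNReal

/-! ### Shifted balls under products of centred Gaussians -/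

/-- Moving an interval away from the origin decreases its centred Gaussian mass. The reflection
`x ↦ m + m' - x` exchanges the two differences of the intervals, and brings points of the farther
one closer to the origin. -/
lemma gaussianReal_shift_aux (v : ℝ≥0) {m m' : ℝ} (h0 : 0 ≤ m) (hm : m ≤ m') (R : ℝ) :
    gaussianReal 0 v {y | |y - m'| ≤ R} ≤ gaussianReal 0 v {y | |y - m| ≤ R} := by
  rcases eq_or_ne v 0 with rfl | hv
  · rw [gaussianReal_zero_var]
    by_cases h : m' ≤ R
    · have h2 : m ≤ R := hm.trans h
      simp [h, h2, abs_of_nonneg h0, abs_of_nonneg (h0.trans hm)]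
    · simp [h, abs_of_nonneg (h0.trans hm)]
  set A : Set ℝ := {y | |y - m| ≤ R} with hA
  set A' : Set ℝ := {y | |y - m'| ≤ R} with hA'
  have mA : MeasurableSet A := measurableSet_le (by fun_prop) measurable_const
  have mA' : MeasurableSet A' := measurableSet_le (by fun_prop) measurable_const
  rw [← measure_inter_add_sdiff A' mA, ← measure_inter_add_sdiff A mA', inter_comm A' A]
  gcongr 1
  rw [gaussianReal_apply _ hv, gaussianReal_apply _ hv]
  have hpre : (fun x : ℝ => (m + m') - x) ⁻¹' (A \ A') = A' \ A := by
    ext x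
    simp only [hA, hA', mem_preimage, Set.mem_sdiff, mem_ofPred_eq]
    rw [show m + m' - x - m = -(x - m') by ring, show m + m' - x - m' = -(x - m) by ring,
      abs_neg, abs_neg]
  rw [← (Measure.measurePreserving_sub_left volume (m + m')).setLIntegral_comp_preimage
    (mA.diff mA') (measurable_gaussianPDF 0 v), hpre]
  refine setLIntegral_mono' (mA'.diff mA) ?_
  rintro x ⟨hx', hx⟩
  simp only [hA, hA', mem_ofPred_eq, not_le] at hx hx'
  have hlt : (x - m') ^ 2 < (x - m) ^ 2 := sq_lt_sq.2 (hx'.trans_lt hx)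
  unfold gaussianPDF gaussianPDFReal
  apply ENNReal.ofReal_le_ofReal
  gcongr 2
  rw [sub_zero, sub_zero]
  gcongr ?_ / _
  have h1 : 0 ≤ m' - m := by linarith
  have h2 : 0 < (m' - m) * (2 * x - m - m') := by nlinarith
  have h3 : 0 < 2 * x - m - m' := by
    by_contra h
    nlinarith
  nlinarith

lemma gaussianReal_neg_abs (v : ℝ≥0) (m R : ℝ) :
    gaussianReal 0 v {y | |y + m| ≤ R} = gaussianReal 0 v {y | abs (y - |m|) ≤ R} := by
  rcases le_total 0 m with h | h
  · rw [abs_of_nonneg h]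
    have := gaussianReal_map_neg (μ := 0) (v := v)
    rw [neg_zero] at this
    conv_lhs => rw [← this]
    rw [Measure.map_apply (by fun_prop) (measurableSet_le (by fun_prop) measurable_const)]
    congr 1
    ext y
    simp only [mem_preimage, mem_ofPred_eq]
    rw [show -y + m = -(y - m) by ring, abs_neg]
  · rw [abs_of_nonpos h]; simp

/-- One-dimensional Anderson inequality, with the interval written as a sublevel set so that it can
be used on slices of balls; the level `t` may be negative. -/
lemma gaussianReal_shift (v : ℝ≥0) {m m' : ℝ} (hm : |m| ≤ |m'|) (t : ℝ) :
    gaussianReal 0 v {y | (y + m') ^ 2 ≤ t} ≤ gaussianReal 0 v {y | (y + m) ^ 2 ≤ t} := by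
  rcases lt_or_ge t 0 with ht | ht
  · have : {y : ℝ | (y + m') ^ 2 ≤ t} = ∅ := by
      ext y; simp only [mem_ofPred_eq, mem_empty_iff_false, iff_false, not_le]; nlinarith
    simp [this]
  · have key : ∀ x : ℝ, x ^ 2 ≤ t ↔ |x| ≤ √t := fun x => by
      rw [← Real.sqrt_le_sqrt_iff ht, Real.sqrt_sq_eq_abs]
    simp only [key]
    rw [gaussianReal_neg_abs, gaussianReal_neg_abs]
    exact gaussianReal_shift_aux v (abs_nonneg _) hm _

/-- Anderson's inequality for balls and a product of centred Gaussians, with the shifts compared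
coordinatewise: the coordinates are moved one at a time, by Fubini. -/
lemma pi_gaussian_shift {n : ℕ} (v : Fin n → ℝ≥0) {m m' : Fin n → ℝ}
    (hm : ∀ i, |m i| ≤ |m' i|) (t : ℝ) :
    Measure.pi (fun i => gaussianReal 0 (v i)) {y | ∑ i, (y i + m' i) ^ 2 ≤ t} ≤
      Measure.pi (fun i => gaussianReal 0 (v i)) {y | ∑ i, (y i + m i) ^ 2 ≤ t} := by
  induction n generalizing t with
  | zero => simp
  | succ n ih =>
    have hmp := measurePreserving_piFinSuccAbove (fun i => gaussianReal 0 (v i)) 0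
    -- the event in product coordinates
    let E : ℝ → (Fin n → ℝ) → Set (ℝ × (Fin n → ℝ)) := fun a b =>
      {z | (z.1 + a) ^ 2 + ∑ i, (z.2 i + b i) ^ 2 ≤ t}
    have hE : ∀ a b, MeasurableSet (E a b) := fun a b =>
      measurableSet_le (by fun_prop) measurable_const
    have hpre : ∀ k : Fin (n + 1) → ℝ,
        Measure.pi (fun i => gaussianReal 0 (v i)) {y | ∑ i, (y i + k i) ^ 2 ≤ t} =
          ((gaussianReal 0 (v 0)).prod (Measure.pi fun i : Fin n => gaussianReal 0 (v i.succ)))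
            (E (k 0) (fun i => k i.succ)) := by
      intro k
      have := hmp.measure_preimage (hE (k 0) (fun i => k i.succ)).nullMeasurableSet
      simp only [Fin.zero_succAbove] at this
      rw [← this]
      congr 1
      ext y
      simp [E, Fin.sum_univ_succ, MeasurableEquiv.piFinSuccAbove, Fin.tail]
    rw [hpre, hpre]
    calc _ ≤ ((gaussianReal 0 (v 0)).prod
          (Measure.pi fun i : Fin n => gaussianReal 0 (v i.succ))) (E (m' 0) (fun i => m i.succ)) := by
          rw [Measure.prod_apply (hE _ _), Measure.prod_apply (hE _ _)]
          refine lintegral_mono fun x => ?_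
          have := ih (fun i => v i.succ) (fun i => hm i.succ) (t - (x + m' 0) ^ 2)
          convert this using 2 <;>
          · ext z
            simp only [E, mem_preimage, mem_ofPred_eq]
            constructor <;> intro h <;> linarith
      _ ≤ _ := by
          rw [Measure.prod_apply_symm (hE _ _), Measure.prod_apply_symm (hE _ _)]
          refine lintegral_mono fun z => ?_
          have := gaussianReal_shift (v 0) (hm 0) (t - ∑ i, (z i + m i.succ) ^ 2)
          convert this using 2 <;>
          · ext x
            simp only [E, mem_preimage, mem_ofPred_eq]
            constructor <;> intro h <;> linarith

/-! ### The correlation inequality for Gaussian vectors -/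

/-- Chebyshev's association inequality for an even function nonincreasing in `|x|` and the indicator
of `{|x| ≤ a}`: `f` is at least `f a` on this set and at most `f a` off it. -/
lemma lintegral_even_antitone (γ : Measure ℝ) [IsProbabilityMeasure γ] (f : ℝ → ℝ≥0∞)
    (hf : ∀ x y, |x| ≤ |y| → f y ≤ f x) {a : ℝ} (ha : 0 ≤ a) :
    (∫⁻ x, f x ∂γ) * γ {x | |x| ≤ a} ≤ ∫⁻ x in {x | |x| ≤ a}, f x ∂γ := by
  set B : Set ℝ := {x | |x| ≤ a} with hB
  have mB : MeasurableSet B := measurableSet_le (by fun_prop) measurable_const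
  rw [← lintegral_add_compl f mB]
  have h1 : f a * γ B ≤ ∫⁻ x in B, f x ∂γ := by
    rw [← setLIntegral_const]
    refine setLIntegral_mono' mB fun x hx => hf _ _ ?_
    rwa [abs_of_nonneg ha]
  have h2 : ∫⁻ x in Bᶜ, f x ∂γ ≤ f a * γ Bᶜ := by
    rw [← setLIntegral_const]
    refine setLIntegral_mono' mB.compl fun x hx => hf _ _ ?_
    rw [abs_of_nonneg ha]
    have hx' : ¬ |x| ≤ a := hx
    exact (not_le.1 hx').le
  calc _ = (∫⁻ x in B, f x ∂γ) * γ B + (∫⁻ x in Bᶜ, f x ∂γ) * γ B := add_mul _ _ _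
    _ ≤ (∫⁻ x in B, f x ∂γ) * γ B + f a * γ Bᶜ * γ B := by gcongr
    _ = (∫⁻ x in B, f x ∂γ) * γ B + f a * γ B * γ Bᶜ := by ring
    _ ≤ (∫⁻ x in B, f x ∂γ) * γ B + (∫⁻ x in B, f x ∂γ) * γ Bᶜ := by gcongr
    _ = (∫⁻ x in B, f x ∂γ) := by rw [← mul_add, prob_add_prob_compl mB, mul_one]

/-- The correlation inequality in the normal form reached by regression and diagonalisation:
`z.1` plays the role of `ξ`, and `z.2` that of the independent coordinates of the residual. -/
lemma indep_corr {n : ℕ} (u : ℝ≥0) (v : Fin n → ℝ≥0) (m : Fin n → ℝ) (r : ℝ) {a : ℝ} (ha : 0 ≤ a) :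
    let μ := (gaussianReal 0 u).prod (Measure.pi fun i => gaussianReal 0 (v i))
    μ {z | ∑ i, (z.2 i + m i * z.1) ^ 2 ≤ r} * μ {z | |z.1| ≤ a} ≤
      μ ({z | ∑ i, (z.2 i + m i * z.1) ^ 2 ≤ r} ∩ {z | |z.1| ≤ a}) := by
  intro μ
  set S : Set (ℝ × (Fin n → ℝ)) := {z | ∑ i, (z.2 i + m i * z.1) ^ 2 ≤ r} with hS
  have mS : MeasurableSet S := measurableSet_le (by fun_prop) measurable_const
  have mB : MeasurableSet {x : ℝ | |x| ≤ a} := measurableSet_le (by fun_prop) measurable_const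
  have mB' : MeasurableSet {z : ℝ × (Fin n → ℝ) | |z.1| ≤ a} :=
    measurableSet_le (by fun_prop) measurable_const
  have hB : μ {z | |z.1| ≤ a} = gaussianReal 0 u {x | |x| ≤ a} := by
    have : {z : ℝ × (Fin n → ℝ) | |z.1| ≤ a} = {x : ℝ | |x| ≤ a} ×ˢ univ := by ext; simp
    rw [this, Measure.prod_prod]; simp
  rw [hB, Measure.prod_apply mS, Measure.prod_apply (mS.inter mB')]
  refine (lintegral_even_antitone _ _ ?_ ha).trans ?_
  · intro x y hxy
    refine pi_gaussian_shift v (m := fun i => m i * x) (m' := fun i => m i * y) ?_ r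
    intro i
    rw [abs_mul, abs_mul]
    gcongr
  · rw [← lintegral_indicator mB]
    refine lintegral_mono fun x => ?_
    by_cases hx : |x| ≤ a
    · simp [indicator, hx, preimage_inter]
    · simp [indicator, hx]

lemma covariance_eq_zero_of_var {Ω : Type*} [MeasurableSpace Ω] {P : Measure Ω}
    [IsProbabilityMeasure P] {X ξ : Ω → ℝ} (hξ : MemLp ξ 2 P) (h : Var[ξ; P] = 0) :
    cov[X, ξ; P] = 0 := by
  have := ae_eq_integral_of_variance_eq_zero hξ h
  rw [covariance]
  refine integral_eq_zero_of_ae ?_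
  filter_upwards [this] with ω hω
  simp [hω]

/-- Spectral theorem for a real symmetric matrix, with an orthogonal matrix `U`. -/
lemma exists_diagonalization {n : ℕ} (C : Matrix (Fin n) (Fin n) ℝ) (hC : ∀ i j, C i j = C j i) :
    ∃ U : Matrix (Fin n) (Fin n) ℝ, U * U.transpose = 1 ∧
      ∀ i j, i ≠ j → (U.transpose * C * U) i j = 0 := by
  have hH : C.IsHermitian := by
    ext i j
    simp [hC i j]
  refine ⟨hH.eigenvectorUnitary, ?_, fun i j hij => ?_⟩
  · have := Unitary.coe_mul_star_self hH.eigenvectorUnitary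
    simpa [Matrix.star_eq_conjTranspose] using this
  · have h := hH.conjStarAlgAut_star_eigenvectorUnitary
    rw [Unitary.conjStarAlgAut_star_apply] at h
    simp only [Matrix.star_eq_conjTranspose, Matrix.conjTranspose_eq_transpose_of_trivial] at h
    rw [h, Matrix.diagonal_apply_ne _ hij]

/-- Ellipsoids and slabs are positively correlated under a centred Gaussian law. The residual `W` of
the regression of `X` on `ξ` is uncorrelated with `ξ`; rotating it by an orthogonal matrix that
diagonalises its covariance gives coordinates `Y` which are independent, and independent of `ξ`. -/
lemma gaussian_corr {Ω : Type*} [MeasurableSpace Ω] {P : Measure Ω}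
    [IsProbabilityMeasure P] {n : ℕ} (X : Fin n → Ω → ℝ) (ξ : Ω → ℝ)
    (hX : ∀ i, Measurable (X i)) (hξ : Measurable ξ)
    (hG : HasGaussianLaw (fun ω => ((fun i => X i ω), ξ ω)) P)
    (hX0 : ∀ i, P[X i] = 0) (hξ0 : P[ξ] = 0) (r : ℝ) {a : ℝ} (ha : 0 ≤ a) :
    P {ω | ∑ i, X i ω ^ 2 ≤ r} * P {ω | |ξ ω| ≤ a} ≤
      P ({ω | ∑ i, X i ω ^ 2 ≤ r} ∩ {ω | |ξ ω| ≤ a}) := by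
  have hξG : HasGaussianLaw ξ P := hG.snd
  have hXG : ∀ i, HasGaussianLaw (X i) P := fun i =>
    hG.map ((ContinuousLinearMap.proj i).comp (ContinuousLinearMap.fst ℝ (Fin n → ℝ) ℝ))
  -- regression of `X` on `ξ`
  let ρ : Fin n → ℝ := fun i => cov[X i, ξ; P] / Var[ξ; P]
  let W : Fin n → Ω → ℝ := fun i ω => X i ω - ρ i * ξ ω
  have hWm : ∀ i, MemLp (W i) 2 P := fun i =>
    (hXG i).memLp_two.sub (hξG.memLp_two.const_mul (ρ i))
  have hWξ : ∀ i, cov[W i, ξ; P] = 0 := by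
    intro i
    have h1 : cov[W i, ξ; P] = cov[X i, ξ; P] - ρ i * cov[ξ, ξ; P] := by
      rw [covariance_fun_sub_left (hXG i).memLp_two (hξG.memLp_two.const_mul _) hξG.memLp_two,
        covariance_const_mul_left]
    rw [h1, covariance_self hξ.aemeasurable]
    -- for degenerate `ξ` the coefficient `ρ i` is the junk value `0`, which is still correct
    by_cases hv : Var[ξ; P] = 0
    · rw [covariance_eq_zero_of_var hξG.memLp_two hv, hv]; simp
    · simp only [ρ]; field_simp; ring
  obtain ⟨U, hU, hD⟩ := exists_diagonalization (Matrix.of fun i j => cov[W i, W j; P])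
    (fun i j => covariance_comm _ _)
  let Y : Fin n → Ω → ℝ := fun i ω => ∑ k, U k i * W k ω
  let m : Fin n → ℝ := fun i => ∑ k, U k i * ρ k
  have hYm : ∀ i, Measurable (Y i) := fun i => by fun_prop
  have hUW : ∀ i k, MemLp (fun ω => U k i * W k ω) 2 P := fun i k => (hWm k).const_mul _
  have hYξ : ∀ i, cov[Y i, ξ; P] = 0 := by
    intro i
    simp only [Y]
    rw [covariance_fun_sum_left (hUW i) hξG.memLp_two]
    simp [covariance_const_mul_left, hWξ]
  have hYY : ∀ i j, i ≠ j → cov[Y i, Y j; P] = 0 := by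
    intro i j hij
    rw [← hD i j hij]
    simp only [Y]
    rw [covariance_fun_sum_fun_sum (hUW i) (hUW j)]
    simp only [covariance_const_mul_left, covariance_const_mul_right, Matrix.mul_apply,
      Matrix.transpose_apply, Matrix.of_apply, Finset.sum_mul]
    rw [Finset.sum_comm]
    refine Finset.sum_congr rfl fun k _ => Finset.sum_congr rfl fun l _ => ?_
    ring
  -- `Y` and `ξ` are jointly Gaussian, being a linear image of `X` and `ξ`
  let L : ((Fin n → ℝ) × ℝ) →L[ℝ] ((Fin n → ℝ) × ℝ) :=
    (ContinuousLinearMap.pi fun i => ∑ k, U k i •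
      ((ContinuousLinearMap.proj k).comp (ContinuousLinearMap.fst ℝ (Fin n → ℝ) ℝ)
        - ρ k • ContinuousLinearMap.snd ℝ (Fin n → ℝ) ℝ)).prod
      (ContinuousLinearMap.snd ℝ (Fin n → ℝ) ℝ)
  have hYG : HasGaussianLaw (fun ω => ((fun i => Y i ω), ξ ω)) P := by
    have e : (L ∘ fun ω => ((fun i => X i ω), ξ ω)) = fun ω => ((fun i => Y i ω), ξ ω) := by
      ext ω i <;> simp [L, Y, W]
    have h := hG.map L
    rw [e] at h
    exact h
  have hYG' : HasGaussianLaw (fun ω i => Y i ω) P := hYG.fst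
  have hYi : ∀ i, HasGaussianLaw (Y i) P := fun i => hYG'.map (ContinuousLinearMap.proj i)
  have hind : iIndepFun Y P := hYG'.iIndepFun_of_covariance_eq_zero hYY
  have hind2 : IndepFun ξ (fun ω i => Y i ω) P := by
    have h1 : HasGaussianLaw (fun ω => ((fun i => Y i ω), (fun _ : Unit => ξ ω))) P :=
      hYG.map ((ContinuousLinearMap.fst ℝ (Fin n → ℝ) ℝ).prod
        (ContinuousLinearMap.pi fun _ : Unit => ContinuousLinearMap.snd ℝ (Fin n → ℝ) ℝ))
    have h2 := h1.indepFun_of_covariance_eval (X := Y) (Y := fun _ : Unit => ξ)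
      (fun i _ => hYξ i)
    exact (h2.comp measurable_id (measurable_pi_apply ())).symm
  have hmean : ∀ i, P[Y i] = 0 := by
    intro i
    simp only [Y]
    rw [integral_finsetSum _ fun k _ => ((hUW i k).integrable (by norm_num))]
    refine Finset.sum_eq_zero fun k _ => ?_
    rw [integral_const_mul]
    simp only [W]
    rw [integral_sub ((hXG k).integrable) (hξG.integrable.const_mul _), integral_const_mul,
      hX0, hξ0]
    simp
  have hlaw : P.map (fun ω => (ξ ω, fun i => Y i ω)) =
      (gaussianReal 0 Var[ξ; P].toNNReal).prod
        (Measure.pi fun i => gaussianReal 0 Var[Y i; P].toNNReal) := by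
    rw [hind2.map_prod_eq_prod_map_map hξ.aemeasurable (by fun_prop),
      (iIndepFun_iff_map_fun_eq_pi_map fun i => (hYm i).aemeasurable).1 hind,
      hξG.map_eq_gaussianReal, hξ0]
    congr 2
    ext i : 1
    rw [(hYi i).map_eq_gaussianReal, hmean]
  have hsum : ∀ ω, ∑ i, (Y i ω + m i * ξ ω) ^ 2 = ∑ i, X i ω ^ 2 := by
    intro ω
    have h1 : ∀ i, Y i ω + m i * ξ ω = (U.transpose.mulVec (fun k => X k ω)) i := by
      intro i
      simp only [Y, m, W, Matrix.mulVec, dotProduct, Matrix.transpose_apply, Finset.sum_mul,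
        ← Finset.sum_add_distrib]
      exact Finset.sum_congr rfl fun k _ => by ring
    have h2 : ∀ v : Fin n → ℝ, ∑ i, v i ^ 2 = v ⬝ᵥ v := fun v => by
      simp [dotProduct, sq]
    simp only [h1]
    rw [h2, h2, Matrix.dotProduct_mulVec, Matrix.vecMul_transpose, Matrix.mulVec_mulVec, hU,
      Matrix.one_mulVec]
  have key := indep_corr Var[ξ; P].toNNReal (fun i => Var[Y i; P].toNNReal) m r ha
  simp only [← hlaw] at key
  have mS : MeasurableSet {z : ℝ × (Fin n → ℝ) | ∑ i, (z.2 i + m i * z.1) ^ 2 ≤ r} :=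
    measurableSet_le (by fun_prop) measurable_const
  have mB : MeasurableSet {z : ℝ × (Fin n → ℝ) | |z.1| ≤ a} :=
    measurableSet_le (by fun_prop) measurable_const
  have hZ : Measurable (fun ω => (ξ ω, fun i => Y i ω)) := by fun_prop
  rw [Measure.map_apply hZ mS, Measure.map_apply hZ mB, Measure.map_apply hZ (mS.inter mB)] at key
  have e1 : (fun ω => (ξ ω, fun i => Y i ω)) ⁻¹'
      {z : ℝ × (Fin n → ℝ) | ∑ i, (z.2 i + m i * z.1) ^ 2 ≤ r} = {ω | ∑ i, X i ω ^ 2 ≤ r} := by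
    ext ω
    simp only [mem_preimage, mem_ofPred_eq, hsum]
  rw [preimage_inter, e1] at key
  exact key

/-! ### The correlation inequality for the infinite quadratic form -/

/-- If all finite linear combinations are Gaussian, then so are the finite-dimensional laws. -/
lemma hasGaussianLaw_finset {Ω : Type*} [MeasurableSpace Ω] {P : Measure Ω}
    {V : ℤ → Ω → ℝ} (hVmeas : ∀ k, Measurable (V k))
    (hVgauss : ∀ (s : Finset ℤ) (c : ℤ → ℝ), ∃ v : ℝ≥0,
      Measure.map (fun ω => ∑ k ∈ s, c k * V k ω) P = gaussianReal 0 v)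
    (s : Finset ℤ) : HasGaussianLaw (fun ω (k : s) => V k ω) P := by
  constructor
  refine isGaussian_of_map_eq_gaussianReal fun L => ?_
  obtain ⟨v, hv⟩ := hVgauss s (fun k => if h : k ∈ s then L (Pi.single ⟨k, h⟩ 1) else 0)
  refine ⟨0, v, ?_⟩
  rw [← hv, Measure.map_map (by fun_prop) (by fun_prop)]
  congr 1
  ext ω
  rw [← Finset.sum_coe_sort s]
  simp only [Function.comp_apply, Finset.coe_mem, dif_pos, Subtype.coe_eta]
  have hx : (fun k : s => V k ω) = ∑ k : s, V k ω • (Pi.single k 1 : s → ℝ) := by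
    ext i
    simp [Finset.sum_apply, Pi.single_apply]
  rw [hx, map_sum]
  refine Finset.sum_congr rfl fun k _ => ?_
  rw [map_smul, smul_eq_mul, mul_comm]

lemma sum_corr {Ω : Type*} [MeasurableSpace Ω] {P : Measure Ω} [IsProbabilityMeasure P]
    {V : ℤ → Ω → ℝ} (hVmeas : ∀ k, Measurable (V k))
    (hVgauss : ∀ (s : Finset ℤ) (c : ℤ → ℝ), ∃ v : ℝ≥0,
      Measure.map (fun ω => ∑ k ∈ s, c k * V k ω) P = gaussianReal 0 v)
    (d : ℤ → ℝ) (j : ℤ) (F : Finset ℤ) (r : ℝ) {a : ℝ} (ha : 0 ≤ a) :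
    P {ω | ∑ k ∈ F, d k ^ 2 * V k ω ^ 2 ≤ r} * P {ω | |V j ω| ≤ a} ≤
      P ({ω | ∑ k ∈ F, d k ^ 2 * V k ω ^ 2 ≤ r} ∩ {ω | |V j ω| ≤ a}) := by
  let e : Fin F.card ≃ F := F.equivFin.symm
  have hmean : ∀ k, P[V k] = 0 := by
    intro k
    obtain ⟨v, hv⟩ := hVgauss {k} 1
    simp only [Finset.sum_singleton, Pi.one_apply, one_mul] at hv
    have h1 : ∫ y, y ∂(P.map (V k)) = P[V k] := integral_map (hVmeas k).aemeasurable (by fun_prop)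
    rw [← h1, show P.map (V k) = gaussianReal 0 v from hv, integral_id_gaussianReal]
  have hG := hasGaussianLaw_finset hVmeas hVgauss (insert j F)
  -- `j` may or may not belong to `F`, so the underlying Gaussian vector is indexed by `insert j F`
  let L : (↥(insert j F) → ℝ) →L[ℝ] ((Fin F.card → ℝ) × ℝ) :=
    (ContinuousLinearMap.pi fun i => d (e i) • ContinuousLinearMap.proj (R := ℝ)
      (φ := fun _ : (insert j F : Finset ℤ) => ℝ)
      ⟨(e i : ℤ), Finset.mem_insert_of_mem (e i).2⟩).prod
      (ContinuousLinearMap.proj (R := ℝ) (φ := fun _ : (insert j F : Finset ℤ) => ℝ)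
        ⟨j, Finset.mem_insert_self j F⟩)
  have hG' : HasGaussianLaw (fun ω => ((fun i => d (e i) * V (e i) ω), V j ω)) P := hG.map L
  have h := gaussian_corr (P := P) (fun i ω => d (e i) * V (e i) ω) (V j)
    (fun i => (hVmeas _).const_mul _) (hVmeas j) hG'
    (fun i => by rw [integral_const_mul, hmean, mul_zero]) (hmean j) r ha
  have hs : ∀ ω, ∑ i, (d (e i) * V (e i) ω) ^ 2 = ∑ k ∈ F, d k ^ 2 * V k ω ^ 2 := by
    intro ω
    rw [Equiv.sum_comp e (fun k : F => (d k * V k ω) ^ 2), ← Finset.sum_coe_sort F]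
    simp [mul_pow]
  simpa only [hs] using h

lemma tsum_le_iff {x : ℤ → ℝ} (hx : ∀ k, 0 ≤ x k) {r : ℝ} (hr : 0 ≤ r) :
    ∑' k, ENNReal.ofReal (x k) ≤ ENNReal.ofReal r ↔ ∀ F : Finset ℤ, ∑ k ∈ F, x k ≤ r := by
  rw [ENNReal.tsum_eq_iSup_sum, iSup_le_iff]
  refine forall_congr' fun F => ?_
  rw [← ENNReal.ofReal_sum_of_nonneg fun k _ => hx k, ENNReal.ofReal_le_ofReal_iff hr]

/-- Passage to the infinite sum: the event `{S ≤ r}` is the decreasing intersection, over finite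
`F`, of the events that the partial sum over `F` is at most `r`. -/
lemma tsum_corr {Ω : Type*} [MeasurableSpace Ω] {P : Measure Ω} [IsProbabilityMeasure P]
    {V : ℤ → Ω → ℝ} (hVmeas : ∀ k, Measurable (V k))
    (hVgauss : ∀ (s : Finset ℤ) (c : ℤ → ℝ), ∃ v : ℝ≥0,
      Measure.map (fun ω => ∑ k ∈ s, c k * V k ω) P = gaussianReal 0 v)
    (d : ℤ → ℝ) (j : ℤ) {r : ℝ} (hr : 0 ≤ r) {a : ℝ} (ha : 0 ≤ a) :
    P {ω | ∑' k : ℤ, ENNReal.ofReal (d k ^ 2 * V k ω ^ 2) ≤ ENNReal.ofReal r} *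
        P {ω | |V j ω| ≤ a} ≤
      P ({ω | ∑' k : ℤ, ENNReal.ofReal (d k ^ 2 * V k ω ^ 2) ≤ ENNReal.ofReal r} ∩
        {ω | |V j ω| ≤ a}) := by
  let S : Finset ℤ → Set Ω := fun F => {ω | ∑ k ∈ F, d k ^ 2 * V k ω ^ 2 ≤ r}
  have hS : {ω | ∑' k : ℤ, ENNReal.ofReal (d k ^ 2 * V k ω ^ 2) ≤ ENNReal.ofReal r} =
      ⋂ F, S F := by
    ext ω
    rw [mem_iInter]
    exact tsum_le_iff (fun k => by positivity) hr
  have mS : ∀ F, MeasurableSet (S F) := fun F => measurableSet_le (by fun_prop) measurable_const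
  have mB : MeasurableSet {ω | |V j ω| ≤ a} := measurableSet_le (by fun_prop) measurable_const
  have hanti : Antitone S := by
    intro F F' hFF' ω hω
    have h : ∑ k ∈ F, d k ^ 2 * V k ω ^ 2 ≤ ∑ k ∈ F', d k ^ 2 * V k ω ^ 2 :=
      Finset.sum_le_sum_of_subset_of_nonneg hFF' fun k _ _ => by positivity
    exact h.trans hω
  have hanti' : Antitone fun F => S F ∩ {ω | |V j ω| ≤ a} :=
    fun F F' h => inter_subset_inter_left _ (hanti h)
  rw [hS, iInter_inter]
  refine le_of_tendsto_of_tendsto'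
    (ENNReal.Tendsto.mul_const (tendsto_measure_iInter_atTop (μ := P)
      (fun F => (mS F).nullMeasurableSet) hanti ⟨∅, measure_ne_top _ _⟩)
      (Or.inr (measure_ne_top _ _)))
    (tendsto_measure_iInter_atTop (μ := P)
      (fun F => ((mS F).inter mB).nullMeasurableSet) hanti' ⟨∅, measure_ne_top _ _⟩) ?_
  intro F
  exact sum_corr hVmeas hVgauss d j F r ha

/-! ### Comparison of small ball probabilities -/

/-- The mass of a small interval about the origin is at least linear in its length. The variance
may vanish. -/
lemma gaussianReal_small_ball (v : ℝ≥0) {a : ℝ} (ha : 0 < a) :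
    ∃ κ > 0, ∀ ε : ℝ, 0 < ε → ε ≤ 1 →
      ENNReal.ofReal (κ * ε) ≤ gaussianReal 0 v {y | |y| ≤ a * ε} := by
  rcases eq_or_ne v 0 with rfl | hv
  · refine ⟨1, one_pos, fun ε h0 h1 => ?_⟩
    have h2 : 0 ≤ a * ε := by positivity
    simp [h2, h1]
  · refine ⟨gaussianPDFReal 0 v a * (2 * a), ?_, fun ε h0 h1 => ?_⟩
    · have := gaussianPDFReal_pos 0 v a hv
      positivity
    have hset : {y : ℝ | |y| ≤ a * ε} = Icc (-(a * ε)) (a * ε) := by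
      ext y
      rw [mem_ofPred_eq, mem_Icc, abs_le]
    rw [hset, gaussianReal_apply _ hv]
    calc ENNReal.ofReal (gaussianPDFReal 0 v a * (2 * a) * ε)
        = ∫⁻ _ in Icc (-(a * ε)) (a * ε), gaussianPDF 0 v a := by
          rw [setLIntegral_const, Real.volume_Icc, gaussianPDF,
            ← ENNReal.ofReal_mul (gaussianPDFReal_nonneg _ _ _)]
          congr 1; ring
      _ ≤ _ := by
          refine setLIntegral_mono' measurableSet_Icc fun x hx => ?_
          have hx' : |x| ≤ a := (abs_le.2 hx).trans (by nlinarith)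
          have hsq : x ^ 2 ≤ a ^ 2 := sq_le_sq.2 (by rwa [abs_of_pos ha])
          unfold gaussianPDF gaussianPDFReal
          apply ENNReal.ofReal_le_ofReal
          gcongr 2
          rw [sub_zero, sub_zero]
          gcongr ?_ / _
          linarith

/-- Changing a single weight alters the small ball probability by at most a factor linear in `ε`, up
to a rescaling of `ε` by `η < 1`. -/
lemma smallBall_le {Ω : Type*} [MeasurableSpace Ω] {P : Measure Ω} [IsProbabilityMeasure P]
    {V : ℤ → Ω → ℝ} (hVmeas : ∀ k, Measurable (V k))
    (hVgauss : ∀ (s : Finset ℤ) (c : ℤ → ℝ), ∃ v : ℝ≥0,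
      Measure.map (fun ω => ∑ k ∈ s, c k * V k ω) P = gaussianReal 0 v)
    {d d' : ℤ → ℝ} {j : ℤ} (hdd' : ∀ k, k ≠ j → d' k = d k) {η : ℝ} (hη0 : 0 < η) (hη1 : η < 1) :
    ∃ κ > 0, ∀ᶠ ε : ℝ in 𝓝[>] 0,
      κ * ε * (P {ω | ∑' k : ℤ, ENNReal.ofReal (d k ^ 2 * V k ω ^ 2)
          ≤ ENNReal.ofReal ((η * ε) ^ 2)}).toReal ≤
        (P {ω | ∑' k : ℤ, ENNReal.ofReal (d' k ^ 2 * V k ω ^ 2)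
          ≤ ENNReal.ofReal (ε ^ 2)}).toReal := by
  have hη2 : 0 < 1 - η ^ 2 := by nlinarith
  -- the slab width `a * ε` is chosen so that the term at `j` uses only the room `(1 - η ^ 2) * ε ^ 2`
  obtain ⟨a, ha, had⟩ : ∃ a > 0, d' j ^ 2 * a ^ 2 ≤ 1 - η ^ 2 := by
    refine ⟨√((1 - η ^ 2) / (1 + d' j ^ 2)), by positivity, ?_⟩
    rw [Real.sq_sqrt (by positivity), mul_div_assoc', div_le_iff₀ (by positivity)]
    nlinarith
  obtain ⟨v, hv⟩ := hVgauss {j} 1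
  simp only [Finset.sum_singleton, Pi.one_apply, one_mul] at hv
  obtain ⟨κ, hκ, hball⟩ := gaussianReal_small_ball v ha
  refine ⟨κ, hκ, ?_⟩
  filter_upwards [Ioc_mem_nhdsGT (zero_lt_one' ℝ)] with ε hε
  have h0 := hε.1
  have hb : ENNReal.ofReal (κ * ε) ≤ P {ω | |V j ω| ≤ a * ε} := by
    refine (hball ε hε.1 hε.2).trans_eq ?_
    rw [← hv]
    exact Measure.map_apply (hVmeas j) (measurableSet_le (by fun_prop) measurable_const)
  rw [← ENNReal.toReal_ofReal (show 0 ≤ κ * ε by positivity), ← ENNReal.toReal_mul]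
  refine ENNReal.toReal_mono (measure_ne_top _ _) ?_
  rw [mul_comm]
  calc _ ≤ P {ω | ∑' k : ℤ, ENNReal.ofReal (d k ^ 2 * V k ω ^ 2)
          ≤ ENNReal.ofReal ((η * ε) ^ 2)} * P {ω | |V j ω| ≤ a * ε} := by gcongr
    _ ≤ _ := tsum_corr hVmeas hVgauss d j (sq_nonneg _) (by positivity)
    _ ≤ _ := by
      refine measure_mono ?_
      rintro ω ⟨h1, h2⟩
      simp only [mem_ofPred_eq] at h1 h2 ⊢
      calc ∑' k : ℤ, ENNReal.ofReal (d' k ^ 2 * V k ω ^ 2)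
          ≤ ∑' k : ℤ, (ENNReal.ofReal (d k ^ 2 * V k ω ^ 2) +
              if k = j then ENNReal.ofReal (d' j ^ 2 * V j ω ^ 2) else 0) := by
            refine ENNReal.tsum_le_tsum fun k => ?_
            by_cases hk : k = j
            · subst hk; simp
            · simp [hk, hdd' k hk]
        _ = ∑' k : ℤ, ENNReal.ofReal (d k ^ 2 * V k ω ^ 2) +
              ENNReal.ofReal (d' j ^ 2 * V j ω ^ 2) := by
            rw [ENNReal.tsum_add, tsum_ite_eq]
        _ ≤ ENNReal.ofReal ((η * ε) ^ 2) + ENNReal.ofReal ((1 - η ^ 2) * ε ^ 2) := by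
            refine add_le_add h1 (ENNReal.ofReal_le_ofReal ?_)
            have h3 : V j ω ^ 2 ≤ (a * ε) ^ 2 := by
              rw [← sq_abs]; gcongr
            calc d' j ^ 2 * V j ω ^ 2 ≤ d' j ^ 2 * (a * ε) ^ 2 := by gcongr
              _ = (d' j ^ 2 * a ^ 2) * ε ^ 2 := by ring
              _ ≤ _ := by gcongr
        _ = ENNReal.ofReal (ε ^ 2) := by
            rw [← ENNReal.ofReal_add (by positivity) (by positivity)]
            congr 1; ring

/-- If `F` and `G` dominate each other up to factors linear in `ε` and rescalings of `ε` by any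
`η < 1`, then `log F ∼ -c ε ^ (-γ)` implies the same for `log G`. -/
lemma asymp_transfer {F G : ℝ → ℝ} (hF0 : ∀ ε, 0 ≤ F ε)
    (hFG : ∀ η : ℝ, 0 < η → η < 1 → ∃ κ > 0, ∀ᶠ ε : ℝ in 𝓝[>] 0, κ * ε * F (η * ε) ≤ G ε)
    (hGF : ∀ η : ℝ, 0 < η → η < 1 → ∃ κ > 0, ∀ᶠ ε : ℝ in 𝓝[>] 0, κ * ε * G (η * ε) ≤ F ε)
    {c γ : ℝ} (hc : 0 < c) (hγ : 0 < γ)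
    (h : Tendsto (fun ε : ℝ => Real.log (F ε) / (-c * ε ^ (-γ))) (𝓝[>] 0) (𝓝 1)) :
    Tendsto (fun ε : ℝ => Real.log (G ε) / (-c * ε ^ (-γ))) (𝓝[>] 0) (𝓝 1) := by
  have hpos : ∀ᶠ ε : ℝ in 𝓝[>] 0, 0 < ε := self_mem_nhdsWithin
  -- `log 0 = 0` would make the quotient vanish, so the limit `1` forces `F` to be positive
  have hFpos : ∀ᶠ ε : ℝ in 𝓝[>] 0, 0 < F ε := by
    filter_upwards [h.eventually_ne one_ne_zero] with ε hε
    refine (hF0 ε).lt_of_ne fun h0 => hε ?_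
    simp [← h0]
  -- scaling preserves the punctured right neighbourhood of `0`
  have hscale : ∀ η : ℝ, 0 < η → Tendsto (fun ε : ℝ => η * ε) (𝓝[>] 0) (𝓝[>] 0) := by
    intro η hη
    refine tendsto_nhdsWithin_iff.2 ⟨?_, ?_⟩
    · have : Tendsto (fun ε : ℝ => η * ε) (𝓝 0) (𝓝 (η * 0)) := tendsto_const_nhds.mul tendsto_id
      rw [mul_zero] at this
      exact this.mono_left nhdsWithin_le_nhds
    · filter_upwards [hpos] with ε hε using mul_pos hη hε
  have hGpos : ∀ᶠ ε : ℝ in 𝓝[>] 0, 0 < G ε := by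
    obtain ⟨κ, hκ, hle⟩ := hFG (1 / 2) (by norm_num) (by norm_num)
    filter_upwards [hle, hpos, (hscale (1 / 2) (by norm_num)).eventually hFpos] with ε h1 h2 h3
    exact lt_of_lt_of_le (by positivity) h1
  -- the polynomial factor is negligible
  have hneg : ∀ κ : ℝ, 0 < κ →
      Tendsto (fun ε : ℝ => Real.log (κ * ε) / (-c * ε ^ (-γ))) (𝓝[>] 0) (𝓝 0) := by
    intro κ hκ
    have h1 := tendsto_log_mul_rpow_nhdsGT_zero hγ
    have h2 : Tendsto (fun ε : ℝ => ε ^ γ) (𝓝[>] 0) (𝓝 0) := by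
      have := (Real.continuousAt_rpow_const 0 γ (Or.inr hγ.le)).tendsto
      rw [Real.zero_rpow hγ.ne'] at this
      exact this.mono_left nhdsWithin_le_nhds
    have h3 := ((h2.const_mul (Real.log κ)).add h1).const_mul (-c⁻¹)
    simp only [mul_zero, add_zero] at h3
    refine h3.congr' ?_
    filter_upwards [hpos] with ε hε
    rw [Real.log_mul hκ.ne' hε.ne', Real.rpow_neg hε.le]
    have := (Real.rpow_pos_of_pos hε γ).ne'
    field_simp
  -- scaling the argument multiplies the normalised logarithm by a power of `η`
  have hresc : ∀ η : ℝ, 0 < η → ∀ ε : ℝ, 0 < ε → ∀ x : ℝ,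
      x / (-c * ε ^ (-γ)) = x / (-c * (η * ε) ^ (-γ)) * η ^ (-γ) := by
    intro η hη ε hε x
    rw [Real.mul_rpow hη.le hε.le]
    have h1 := (Real.rpow_pos_of_pos hε (-γ)).ne'
    have h2 := (Real.rpow_pos_of_pos hη (-γ)).ne'
    field_simp
  have hpow : ∀ s : ℝ, Tendsto (fun η : ℝ => η ^ s) (𝓝[<] 1) (𝓝 1) := by
    intro s
    have := (Real.continuousAt_rpow_const 1 s (Or.inl one_ne_zero)).tendsto
    rw [Real.one_rpow] at this
    exact this.mono_left nhdsWithin_le_nhds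
  have h01 : ∀ᶠ η : ℝ in 𝓝[<] 1, 0 < η ∧ η < 1 :=
    Ioo_mem_nhdsLT (zero_lt_one' ℝ)
  refine tendsto_order.2 ⟨fun b hb => ?_, fun b hb => ?_⟩
  -- lower bound for the quotient: `G` is bounded above by `F` at `η⁻¹ * ε`
  · obtain ⟨η, hηb, hη0, hη1⟩ := (((hpow γ).eventually_const_lt hb).and h01).exists
    obtain ⟨κ, hκ, hle⟩ := hGF η hη0 hη1
    have hi : 0 < η⁻¹ := inv_pos.2 hη0
    have hlim : Tendsto (fun ε : ℝ => Real.log (F (η⁻¹ * ε)) / (-c * (η⁻¹ * ε) ^ (-γ)) * η ^ γ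
        - Real.log (κ * η⁻¹ * ε) / (-c * ε ^ (-γ))) (𝓝[>] 0) (𝓝 (1 * η ^ γ - 0)) :=
      ((h.comp (hscale _ hi)).mul_const _).sub (hneg _ (by positivity))
    rw [one_mul, sub_zero] at hlim
    filter_upwards [hlim.eventually_const_lt hηb, hpos, (hscale _ hi).eventually hle, hGpos]
      with ε h1 h2 h3 h4
    refine h1.trans_le ?_
    have e1 : η ^ γ = η⁻¹ ^ (-γ) := by rw [Real.rpow_neg hi.le, Real.inv_rpow hη0.le, inv_inv]
    rw [e1, ← hresc _ hi ε h2, ← sub_div]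
    have hA : 0 < c * ε ^ (-γ) := by positivity
    rw [neg_mul, div_neg, div_neg, neg_le_neg_iff]
    gcongr
    rw [le_sub_iff_add_le, ← Real.log_mul h4.ne' (by positivity)]
    apply Real.log_le_log (by positivity)
    rw [mul_inv_cancel_left₀ hη0.ne'] at h3
    linarith
  -- upper bound for the quotient: `G` is bounded below by `F` at `η * ε`
  · obtain ⟨η, hηb, hη0, hη1⟩ := (((hpow (-γ)).eventually_lt_const hb).and h01).exists
    obtain ⟨κ, hκ, hle⟩ := hFG η hη0 hη1
    have hlim : Tendsto (fun ε : ℝ => Real.log (F (η * ε)) / (-c * (η * ε) ^ (-γ)) * η ^ (-γ)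
        + Real.log (κ * ε) / (-c * ε ^ (-γ))) (𝓝[>] 0) (𝓝 (1 * η ^ (-γ) + 0)) :=
      ((h.comp (hscale _ hη0)).mul_const _).add (hneg _ hκ)
    rw [one_mul, add_zero] at hlim
    filter_upwards [hlim.eventually_lt_const hηb, hpos, hle, (hscale _ hη0).eventually hFpos]
      with ε h1 h2 h3 h4
    refine lt_of_le_of_lt ?_ h1
    rw [← hresc _ hη0 ε h2, ← add_div]
    have hA : 0 < c * ε ^ (-γ) := by positivity
    rw [neg_mul, div_neg, div_neg, neg_le_neg_iff]
    gcongr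
    rw [← Real.log_mul h4.ne' (by positivity)]
    apply Real.log_le_log (by positivity)
    linarith


/-! ### The main result -/

/-- **Finitely many weights are irrelevant for logarithmic small deviation asymptotics**
(Hong, Lifshits, Nazarov, final reduction step of the proof of Theorem 1.1).

Let `(V k)_{k ∈ ℤ}` be a centered jointly Gaussian sequence and let `(d k)`, `(d' k)`
be nonnegative weights with `d k = d' k` for all but finitely many `k`, such that the
quadratic forms `S = ∑ k, d k ^ 2 * V k ^ 2` and `S' = ∑ k, d' k ^ 2 * V k ^ 2` are
a.s. finite.  If `ln P(S ≤ ε ^ 2) ∼ -c * ε ^ (-γ)` as `ε → 0⁺` for some `c, γ > 0`,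
then also `ln P(S' ≤ ε ^ 2) ∼ -c * ε ^ (-γ)` as `ε → 0⁺`. -/
theorem finitely_many_weights_irrelevant_for_small_deviations
    {Ω : Type*} [MeasurableSpace Ω] (P : Measure Ω) [IsProbabilityMeasure P]
    (V : ℤ → Ω → ℝ) (hVmeas : ∀ k, Measurable (V k))
    (hVgauss : ∀ (s : Finset ℤ) (c : ℤ → ℝ), ∃ v : ℝ≥0,
      Measure.map (fun ω => ∑ k ∈ s, c k * V k ω) P = gaussianReal 0 v)
    (d d' : ℤ → ℝ) (hd : ∀ k, 0 ≤ d k) (hd' : ∀ k, 0 ≤ d' k)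
    (hfin : {k : ℤ | d k ≠ d' k}.Finite)
    (hS : ∀ᵐ ω ∂P, (∑' k : ℤ, ENNReal.ofReal ((d k) ^ 2 * (V k ω) ^ 2)) < ⊤)
    (hS' : ∀ᵐ ω ∂P, (∑' k : ℤ, ENNReal.ofReal ((d' k) ^ 2 * (V k ω) ^ 2)) < ⊤)
    (c γ : ℝ) (hc : 0 < c) (hγ : 0 < γ)
    (hasymp : Tendsto (fun ε : ℝ =>
        Real.log ((P {ω | ∑' k : ℤ, ENNReal.ofReal ((d k) ^ 2 * (V k ω) ^ 2)
            ≤ ENNReal.ofReal (ε ^ 2)}).toReal) / (-c * ε ^ (-γ)))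
      (𝓝[>] 0) (𝓝 1)) :
    Tendsto (fun ε : ℝ =>
        Real.log ((P {ω | ∑' k : ℤ, ENNReal.ofReal ((d' k) ^ 2 * (V k ω) ^ 2)
            ≤ ENNReal.ofReal (ε ^ 2)}).toReal) / (-c * ε ^ (-γ)))
      (𝓝[>] 0) (𝓝 1) := by
  have hstep : ∀ (e e' : ℤ → ℝ) (j : ℤ), (∀ k, k ≠ j → e' k = e k) →
      Tendsto (fun ε : ℝ =>
        Real.log ((P {ω | ∑' k : ℤ, ENNReal.ofReal ((e k) ^ 2 * (V k ω) ^ 2)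
            ≤ ENNReal.ofReal (ε ^ 2)}).toReal) / (-c * ε ^ (-γ))) (𝓝[>] 0) (𝓝 1) →
      Tendsto (fun ε : ℝ =>
        Real.log ((P {ω | ∑' k : ℤ, ENNReal.ofReal ((e' k) ^ 2 * (V k ω) ^ 2)
            ≤ ENNReal.ofReal (ε ^ 2)}).toReal) / (-c * ε ^ (-γ))) (𝓝[>] 0) (𝓝 1) := by
    intro e e' j hee' h
    exact asymp_transfer
      (F := fun ε => (P {ω | ∑' k : ℤ, ENNReal.ofReal ((e k) ^ 2 * (V k ω) ^ 2)
        ≤ ENNReal.ofReal (ε ^ 2)}).toReal)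
      (G := fun ε => (P {ω | ∑' k : ℤ, ENNReal.ofReal ((e' k) ^ 2 * (V k ω) ^ 2)
        ≤ ENNReal.ofReal (ε ^ 2)}).toReal)
      (fun _ => ENNReal.toReal_nonneg)
      (fun η h0 h1 => smallBall_le hVmeas hVgauss hee' h0 h1)
      (fun η h0 h1 => smallBall_le hVmeas hVgauss (fun k hk => (hee' k hk).symm) h0 h1)
      hc hγ h
  -- interpolate between `d` and `d'`, switching one weight at a time
  have hind : ∀ s : Finset ℤ, Tendsto (fun ε : ℝ =>
        Real.log ((P {ω | ∑' k : ℤ, ENNReal.ofReal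
          ((if k ∈ s then d' k else d k) ^ 2 * (V k ω) ^ 2)
            ≤ ENNReal.ofReal (ε ^ 2)}).toReal) / (-c * ε ^ (-γ))) (𝓝[>] 0) (𝓝 1) := by
    intro s
    induction s using Finset.induction_on with
    | empty => simpa using hasymp
    | insert j s _ ih =>
      refine hstep (fun k => if k ∈ s then d' k else d k)
        (fun k => if k ∈ insert j s then d' k else d k) j (fun k hk => ?_) ih
      simp [hk]
  have hend : (fun k => if k ∈ hfin.toFinset then d' k else d k) = d' := by
    ext k
    by_cases hk : d k = d' k <;> simp [hk]
  have := hind hfin.toFinset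
  simpa only [congrFun hend] using this
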